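/- arXiv:1801.03473 — 3 statements merged into one kernel-verified Lean document; each statement's English description precedes it below -/
import Mathlib

section
/- Let γ₁, γ₂ ∈ [0,1) with γ := γ₁ + γ₂ ∈ (0,1), and let f : ℝ → ℝ satisfy |f(x) − f(y)| ≤ K·|x − y|^γ for all x, y ∈ ℝ, where K ≥ 0. Then for all x₁, x₂, r ∈ ℝ one has |f(x₁ + r) − f(x₁) − f(x₂ + r) + f(x₂)| ≤ 2·K·|x₁ − x₂|^{γ₁}·|r|^{γ₂}. -/
open Set

/-!
The four terms of the second difference can be paired in two ways: as two increments of `f` of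
length `‖x₁ - x₂‖`, or as two increments of length `‖r‖`. The Hölder bound on the shorter of the
two lengths is then interpolated by splitting its exponent.
-/

theorem min_rpow_add_le_rpow_mul_rpow {a b p q : ℝ} (ha : 0 ≤ a) (hb : 0 ≤ b)
    (hp : 0 ≤ p) (hq : 0 ≤ q) :
    min (a ^ (p + q)) (b ^ (p + q)) ≤ a ^ p * b ^ q := by
  rcases le_total a b with hab | hba
  · calc
      min (a ^ (p + q)) (b ^ (p + q)) ≤ a ^ (p + q) := min_le_left _ _
      _ = a ^ p * a ^ q := Real.rpow_add_of_nonneg ha hp hq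
      _ ≤ a ^ p * b ^ q := by gcongr
  · calc
      min (a ^ (p + q)) (b ^ (p + q)) ≤ b ^ (p + q) := min_le_right _ _
      _ = b ^ p * b ^ q := Real.rpow_add_of_nonneg hb hp hq
      _ ≤ a ^ p * b ^ q := by gcongr

section SeminormedGroup

variable {E F : Type*} [SeminormedAddCommGroup E] [SeminormedAddCommGroup F] {f : E → F}

theorem norm_second_difference_le_two_mul_min {ω : ℝ → ℝ}
    (hf : ∀ x y, ‖f x - f y‖ ≤ ω ‖x - y‖) (x₁ x₂ r : E) :
    ‖f (x₁ + r) - f x₁ - f (x₂ + r) + f x₂‖ ≤ 2 * min (ω ‖x₁ - x₂‖) (ω ‖r‖) := by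
  have along_base_points :
      ‖f (x₁ + r) - f x₁ - f (x₂ + r) + f x₂‖ ≤ 2 * ω ‖x₁ - x₂‖ := calc
    _ = ‖(f (x₁ + r) - f (x₂ + r)) - (f x₁ - f x₂)‖ := by congr 1; abel
    _ ≤ ‖f (x₁ + r) - f (x₂ + r)‖ + ‖f x₁ - f x₂‖ := norm_sub_le _ _
    _ ≤ ω ‖x₁ - x₂‖ + ω ‖x₁ - x₂‖ :=
      add_le_add (by simpa only [add_sub_add_right_eq_sub] using hf (x₁ + r) (x₂ + r)) (hf x₁ x₂)
    _ = 2 * ω ‖x₁ - x₂‖ := (two_mul _).symm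
  have along_step :
      ‖f (x₁ + r) - f x₁ - f (x₂ + r) + f x₂‖ ≤ 2 * ω ‖r‖ := calc
    _ = ‖(f (x₁ + r) - f x₁) - (f (x₂ + r) - f x₂)‖ := by congr 1; abel
    _ ≤ ‖f (x₁ + r) - f x₁‖ + ‖f (x₂ + r) - f x₂‖ := norm_sub_le _ _
    _ ≤ ω ‖r‖ + ω ‖r‖ :=
      add_le_add (by simpa only [add_sub_cancel_left] using hf (x₁ + r) x₁)
        (by simpa only [add_sub_cancel_left] using hf (x₂ + r) x₂)
    _ = 2 * ω ‖r‖ := (two_mul _).symm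
  rw [mul_min_of_nonneg _ _ zero_le_two]
  exact le_min along_base_points along_step

theorem second_difference_holder_low_general {γ₁ γ₂ K : ℝ} (hγ₁ : 0 ≤ γ₁) (hγ₂ : 0 ≤ γ₂)
    (hK : 0 ≤ K) (hf : ∀ x y, ‖f x - f y‖ ≤ K * ‖x - y‖ ^ (γ₁ + γ₂)) (x₁ x₂ r : E) :
    ‖f (x₁ + r) - f x₁ - f (x₂ + r) + f x₂‖ ≤ 2 * K * ‖x₁ - x₂‖ ^ γ₁ * ‖r‖ ^ γ₂ := calc
  _ ≤ 2 * min (K * ‖x₁ - x₂‖ ^ (γ₁ + γ₂)) (K * ‖r‖ ^ (γ₁ + γ₂)) :=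
    norm_second_difference_le_two_mul_min (ω := fun t ↦ K * t ^ (γ₁ + γ₂)) hf x₁ x₂ r
  _ = 2 * K * min (‖x₁ - x₂‖ ^ (γ₁ + γ₂)) (‖r‖ ^ (γ₁ + γ₂)) := by
    rw [← mul_min_of_nonneg _ _ hK, mul_assoc]
  _ ≤ 2 * K * (‖x₁ - x₂‖ ^ γ₁ * ‖r‖ ^ γ₂) := by
    gcongr
    exact min_rpow_add_le_rpow_mul_rpow (norm_nonneg _) (norm_nonneg _) hγ₁ hγ₂
  _ = 2 * K * ‖x₁ - x₂‖ ^ γ₁ * ‖r‖ ^ γ₂ := (mul_assoc _ _ _).symm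

end SeminormedGroup

/-- If `f : ℝ → ℝ` is `(γ₁+γ₂)`-Hölder with constant `K`, where
`γ₁, γ₂ ∈ [0,1)` and `γ₁ + γ₂ ∈ (0,1)`, then the second difference of `f` satisfies
`|f(x₁+r) − f(x₁) − f(x₂+r) + f(x₂)| ≤ 2·K·|x₁−x₂|^γ₁·|r|^γ₂`. -/
theorem second_difference_holder_low (γ₁ γ₂ : ℝ)
    (hγ₁ : γ₁ ∈ Ico (0 : ℝ) 1) (hγ₂ : γ₂ ∈ Ico (0 : ℝ) 1)
    (hγ : γ₁ + γ₂ ∈ Ioo (0 : ℝ) 1)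
    (K : ℝ) (hK : 0 ≤ K) (f : ℝ → ℝ)
    (hf : ∀ x y : ℝ, |f x - f y| ≤ K * |x - y| ^ (γ₁ + γ₂)) :
    ∀ x₁ x₂ r : ℝ,
      |f (x₁ + r) - f x₁ - f (x₂ + r) + f x₂| ≤ 2 * K * |x₁ - x₂| ^ γ₁ * |r| ^ γ₂ :=
  second_difference_holder_low_general (f := f) hγ₁.1 hγ₂.1 hK hf
end

section
/- Let γ ∈ (1,2) and γ₁, γ₂ ∈ (0,1) with γ₁ + γ₂ = γ. Let f : ℝ → ℝ be differentiable with derivative f′ satisfying |f′(x) − f′(y)| ≤ K·|x − y|^{γ−1} for all x, y ∈ ℝ, where K ≥ 0. Then for all x₁, x₂, r ∈ ℝ one has |f(x₁ + r) − f(x₁) − f(x₂ + r) + f(x₂)| ≤ K·|x₁ − x₂|^{γ₁}·|r|^{γ₂}. -/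
open Set

/-!
A second difference `Δ_[h] (Δ_[k] f)` is the increment along `h` of `Δ_[k] f`, whose derivative
`Δ_[k] (fderiv 𝕜 f)` is at most `K * ‖k‖ ^ (p + q - 1)`. The mean value inequality thus gives the
bound `K * ‖k‖ ^ (p + q - 1) * ‖h‖`. Since the two differences commute, `h` may be taken to be the
shorter increment, and then `‖h‖ = ‖h‖ ^ (1 - q) * ‖h‖ ^ q ≤ ‖k‖ ^ (1 - q) * ‖h‖ ^ q` turns this
into `K * ‖k‖ ^ p * ‖h‖ ^ q`.
-/

open scoped fwdDiff

lemma fwdDiff_comm {M G : Type*} [AddCommMonoid M] [AddCommGroup G] (h k : M) (f : M → G) :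
    Δ_[h] (Δ_[k] f) = Δ_[k] (Δ_[h] f) := by
  ext x
  simp only [fwdDiff, add_right_comm x h k]
  abel

lemma rpow_add_sub_one_mul_le {a b p q : ℝ} (hb : 0 ≤ b) (hba : b ≤ a) (hq : q ≤ 1) :
    a ^ (p + q - 1) * b ≤ a ^ p * b ^ q := by
  rcases hb.eq_or_lt with rfl | hb_pos
  · rw [mul_zero]
    positivity
  have ha_pos : 0 < a := hb_pos.trans_le hba
  have hb_split : b = b ^ (1 - q) * b ^ q := by
    rw [← Real.rpow_add hb_pos, sub_add_cancel, Real.rpow_one]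
  calc a ^ (p + q - 1) * b = a ^ (p + q - 1) * (b ^ (1 - q) * b ^ q) := by rw [← hb_split]
    _ ≤ a ^ (p + q - 1) * (a ^ (1 - q) * b ^ q) := by gcongr
    _ = a ^ p * b ^ q := by
      rw [← mul_assoc, ← Real.rpow_add ha_pos]
      ring_nf

lemma norm_fderiv_sub_fderiv {𝕜 F : Type*} [NontriviallyNormedField 𝕜] [NormedAddCommGroup F]
    [NormedSpace 𝕜 F] (f : 𝕜 → F) (x y : 𝕜) :
    ‖fderiv 𝕜 f x - fderiv 𝕜 f y‖ = ‖deriv f x - deriv f y‖ := by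
  simpa only [map_sub, ContinuousLinearMap.toSpanSingletonLIE_apply, toSpanSingleton_deriv] using
    (ContinuousLinearMap.toSpanSingletonLIE 𝕜 F).norm_map (deriv f x - deriv f y)

lemma hasFDerivAt_fwdDiff {𝕜 E F : Type*} [NontriviallyNormedField 𝕜] [NormedAddCommGroup E]
    [NormedSpace 𝕜 E] [NormedAddCommGroup F] [NormedSpace 𝕜 F] {f : E → F} {h x : E}
    (hxh : DifferentiableAt 𝕜 f (x + h)) (hx : DifferentiableAt 𝕜 f x) :
    HasFDerivAt (Δ_[h] f) (Δ_[h] (fderiv 𝕜 f) x) x :=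
  ((hasFDerivAt_comp_add_right h).2 hxh.hasFDerivAt).sub hx.hasFDerivAt

section NormedSpace

variable {𝕜 E F : Type*} [RCLike 𝕜] [NormedAddCommGroup E] [NormedSpace 𝕜 E]
  [NormedAddCommGroup F] [NormedSpace 𝕜 F] {f : E → F}

lemma norm_fwdDiff_fwdDiff_le_of_norm_fwdDiff_fderiv_le {C : ℝ} {k : E}
    (hf : Differentiable 𝕜 f) (hC : ∀ x, ‖Δ_[k] (fderiv 𝕜 f) x‖ ≤ C) (h x : E) :
    ‖Δ_[h] (Δ_[k] f) x‖ ≤ C * ‖h‖ := by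
  let := NormedSpace.restrictScalars ℝ 𝕜 E
  have mean_value : ‖Δ_[k] f (x + h) - Δ_[k] f x‖ ≤ C * ‖x + h - x‖ :=
    convex_univ.norm_image_sub_le_of_norm_hasFDerivWithin_le
      (fun y _ ↦ (hasFDerivAt_fwdDiff (hf (y + k)) (hf y)).hasFDerivWithinAt) (fun y _ ↦ hC y)
      (mem_univ x) (mem_univ (x + h))
  rwa [add_sub_cancel_left] at mean_value

lemma norm_fwdDiff_fwdDiff_le_rpow_of_norm_le {K p q : ℝ} (hK : 0 ≤ K) (hq : q ≤ 1)
    (hf : Differentiable 𝕜 f)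
    (hf' : ∀ x y, ‖fderiv 𝕜 f x - fderiv 𝕜 f y‖ ≤ K * ‖x - y‖ ^ (p + q - 1))
    {h k : E} (hhk : ‖h‖ ≤ ‖k‖) (x : E) :
    ‖Δ_[h] (Δ_[k] f) x‖ ≤ K * ‖k‖ ^ p * ‖h‖ ^ q := by
  have hC (y : E) : ‖Δ_[k] (fderiv 𝕜 f) y‖ ≤ K * ‖k‖ ^ (p + q - 1) := by
    simpa only [fwdDiff, add_sub_cancel_left] using hf' (y + k) y
  calc ‖Δ_[h] (Δ_[k] f) x‖ ≤ K * ‖k‖ ^ (p + q - 1) * ‖h‖ :=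
      norm_fwdDiff_fwdDiff_le_of_norm_fwdDiff_fderiv_le hf hC h x
    _ = K * (‖k‖ ^ (p + q - 1) * ‖h‖) := mul_assoc ..
    _ ≤ K * (‖k‖ ^ p * ‖h‖ ^ q) :=
      mul_le_mul_of_nonneg_left (rpow_add_sub_one_mul_le (norm_nonneg h) hhk hq) hK
    _ = K * ‖k‖ ^ p * ‖h‖ ^ q := (mul_assoc ..).symm

theorem second_difference_holder_high_general {K γ₁ γ₂ : ℝ} (hK : 0 ≤ K) (hγ₁ : γ₁ ≤ 1)
    (hγ₂ : γ₂ ≤ 1) (hf : Differentiable 𝕜 f)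
    (hf' : ∀ x y, ‖fderiv 𝕜 f x - fderiv 𝕜 f y‖ ≤ K * ‖x - y‖ ^ (γ₁ + γ₂ - 1)) (x₁ x₂ r : E) :
    ‖f (x₁ + r) - f x₁ - f (x₂ + r) + f x₂‖ ≤ K * ‖x₁ - x₂‖ ^ γ₁ * ‖r‖ ^ γ₂ := by
  have second_diff : f (x₁ + r) - f x₁ - f (x₂ + r) + f x₂ = Δ_[r] (Δ_[x₁ - x₂] f) x₂ := by
    rw [fwdDiff_comm]
    simp only [fwdDiff, add_sub_cancel, sub_add]
  rw [second_diff]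
  rcases le_total ‖r‖ ‖x₁ - x₂‖ with hr | hr
  · exact norm_fwdDiff_fwdDiff_le_rpow_of_norm_le hK hγ₂ hf hf' hr x₂
  · rw [fwdDiff_comm, mul_right_comm]
    rw [add_comm γ₁ γ₂] at hf'
    exact norm_fwdDiff_fwdDiff_le_rpow_of_norm_le hK hγ₁ hf hf' hr x₂

end NormedSpace

/-- If `f : ℝ → ℝ` is differentiable and its derivative is
`(γ−1)`-Hölder with constant `K`, where `γ ∈ (1,2)` and `γ₁, γ₂ ∈ (0,1)` with
`γ₁ + γ₂ = γ`, then the second difference of `f` satisfies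
`|f(x₁+r) − f(x₁) − f(x₂+r) + f(x₂)| ≤ K·|x₁−x₂|^γ₁·|r|^γ₂`. -/
theorem second_difference_holder_high (γ γ₁ γ₂ : ℝ)
    (hγ : γ ∈ Ioo (1 : ℝ) 2) (hγ₁ : γ₁ ∈ Ioo (0 : ℝ) 1) (hγ₂ : γ₂ ∈ Ioo (0 : ℝ) 1)
    (hsum : γ₁ + γ₂ = γ)
    (K : ℝ) (hK : 0 ≤ K) (f : ℝ → ℝ)
    (hdiff : Differentiable ℝ f)
    (hf' : ∀ x y : ℝ, |deriv f x - deriv f y| ≤ K * |x - y| ^ (γ - 1)) :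
    ∀ x₁ x₂ r : ℝ,
      |f (x₁ + r) - f x₁ - f (x₂ + r) + f x₂| ≤ K * |x₁ - x₂| ^ γ₁ * |r| ^ γ₂ := by
  subst hsum
  exact second_difference_holder_high_general hK hγ₁.2.le hγ₂.2.le hdiff
    fun x y ↦ (norm_fderiv_sub_fderiv f x y).trans_le (hf' x y)
end

section
/- Let (Ω, ℱ, P) be a probability space, T > 0, and let X : [0,T] × Ω → ℝ be a jointly measurable process. Let (f_n) be a sequence of continuous functions ℝ → ℝ with sup_n sup_x |f_n(x)| < ∞, and let (b_n) be a sequence of bounded continuous functions ℝ → ℝ. Define A^n_{t′}(ω) := ∫_0^{t′} b_n(X_s(ω)) ds and let A : [0,T] × Ω → ℝ be a process such that for every t′ ∈ [0,T] the random variables A^n_{t′} converge to A_{t′} in probability as n → ∞. Let p₁, p₂ > 0 with 1/p₁ + 1/p₂ ≤ 1, γ₁, γ₂ > 0 with γ₁ + γ₂ > 1, and constants C_f, C_A ≥ 1 such that for all n and all s′, t′ ∈ [0,T]: E|f_n(X_{t′}) − f_n(X_{s′})|^{p₁} ≤ C_f^{p₁}·|t′ − s′|^{p₁γ₁}, E|f_n(X_{t′})|^{p₁}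 ≤ C_f^{p₁}, E|A_{t′} − A_{s′}|^{p₂} ≤ C_A^{p₂}·|t′ − s′|^{p₂γ₂}, and E|A^n_{t′} − A^n_{s′}|^{p₂} ≤ C_A^{p₂}·|t′ − s′|^{p₂γ₂}. Fix t ∈ [0,T] and for m ∈ ℕ set t^k_m := k·t·2^{−m}. For each n, let I_n be a random variable such that the dyadic Riemann sums Σ_{i=0}^{2^m−1} f_n(X_{t^i_m})·(A_{t^{i+1}_m} − A_{t^i_m}) converge to I_n in probability as m → ∞, and set J_n := ∫_0^t f_n(X_s)·b_n(X_s) ds. Then I_n − J_n converges to 0 in probability as n → ∞. -/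
open MeasureTheory Filter Set intervalIntegral

/-- The `m`-th dyadic left-endpoint Riemann sum
`Σ_{i=0}^{2^m−1} f(X_{t^i_m}(ω))·(A_{t^{i+1}_m}(ω) − A_{t^i_m}(ω))`,
where `t^k_m := s + k·2^{−m}·(t − s)`. -/
noncomputable def dyadicRiemannSum {Ω : Type*} (X A : ℝ → Ω → ℝ) (f : ℝ → ℝ)
    (s t : ℝ) (m : ℕ) (ω : Ω) : ℝ :=
  ∑ i ∈ Finset.range (2 ^ m),
    f (X (s + (i : ℝ) * (2 : ℝ) ^ (-(m : ℝ)) * (t - s)) ω) *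
      (A (s + ((i : ℝ) + 1) * (2 : ℝ) ^ (-(m : ℝ)) * (t - s)) ω -
        A (s + (i : ℝ) * (2 : ℝ) ^ (-(m : ℝ)) * (t - s)) ω)

/-!
Passing from one dyadic partition to the next changes a left Riemann sum of `Y` against `B` by
`2 ^ m` products of an increment of `Y` with an increment of `B`. If `Y` and `B` are Hölder
continuous in `L^p₁` and `L^p₂` with exponents `γ₁ + γ₂ > 1`, Hölder's inequality bounds this change
by a term of a convergent geometric series, so the Riemann sums are close to their limit at a rate
that depends only on the Hölder constants. With `Y = f_n(X)` this applies to the integrator `A`,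
where the limit is `I_n`, and to the integrator `A^n`, where it is `J_n`; hence `I_n - J_n` is
approximated, uniformly in `n`, by the level-`m` sum against `A - A^n`. For fixed `m` that sum
involves finitely many times, so it tends to `0` in probability as `n → ∞`.
-/

open ENNReal
open scoped NNReal Topology

section ConvergenceInMeasure

variable {α ι κ E F G : Type*} {mα : MeasurableSpace α} {μ : Measure α} {l : Filter ι}

lemma tendstoInMeasure_of_edist_le_add [EDist E] [EDist F] [EDist G]
    {f : ι → α → E} {g : α → E} {f' : ι → α → F} {g' : α → F} {u : ι → α → G} {v : α → G}
    (hf : TendstoInMeasure μ f l g) (hf' : TendstoInMeasure μ f' l g')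
    (h : ∀ i x, edist (u i x) (v x) ≤ edist (f i x) (g x) + edist (f' i x) (g' x)) :
    TendstoInMeasure μ u l v := by
  intro ε hε
  have hsum := (hf _ (ENNReal.half_pos hε.ne')).add (hf' _ (ENNReal.half_pos hε.ne'))
  rw [add_zero] at hsum
  refine tendsto_of_tendsto_of_tendsto_of_le_of_le tendsto_const_nhds hsum (fun _ => zero_le)
    fun i => (measure_mono fun x (hx : ε ≤ _) => ?_).trans (measure_union_le _ _)
  by_contra! hlt
  simp only [mem_union, mem_ofPred_eq, not_or, not_le] at hlt
  refine (hx.trans (h i x)).not_gt ?_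
  calc _ < ε / 2 + ε / 2 := ENNReal.add_lt_add hlt.1 hlt.2
    _ = ε := ENNReal.add_halves ε

variable [NormedAddCommGroup E]

lemma tendstoInMeasure_add {f f' : ι → α → E} {g g' : α → E}
    (hf : TendstoInMeasure μ f l g) (hf' : TendstoInMeasure μ f' l g') :
    TendstoInMeasure μ (fun i => f i + f' i) l (g + g') :=
  tendstoInMeasure_of_edist_le_add hf hf' fun _ _ => edist_add_add_le _ _ _ _

lemma tendstoInMeasure_sub {f f' : ι → α → E} {g g' : α → E}
    (hf : TendstoInMeasure μ f l g) (hf' : TendstoInMeasure μ f' l g') :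
    TendstoInMeasure μ (fun i => f i - f' i) l (g - g') :=
  tendstoInMeasure_of_edist_le_add hf hf' fun i x => by
    simpa only [Pi.sub_apply, sub_eq_add_neg, edist_neg_neg] using
      edist_add_add_le (f i x) (-f' i x) (g x) (-g' x)

lemma tendstoInMeasure_sum {f : κ → ι → α → E} {g : κ → α → E} (s : Finset κ)
    (h : ∀ k ∈ s, TendstoInMeasure μ (f k) l (g k)) :
    TendstoInMeasure μ (fun i => ∑ k ∈ s, f k i) l (∑ k ∈ s, g k) := by
  classical
  induction s using Finset.induction_on with
  | empty => exact fun ε hε => by simpa [hε.ne'] using tendsto_const_nhds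
  | insert k s hk ih =>
    simp only [Finset.sum_insert hk]
    exact tendstoInMeasure_add (h k (Finset.mem_insert_self k s))
      (ih fun j hj => h j (Finset.mem_insert_of_mem hj))

lemma tendstoInMeasure_bdd_mul_zero [NormedRing F] {f g : ι → α → F} {M : ℝ}
    (hf : ∀ i x, ‖f i x‖ ≤ M) (hg : TendstoInMeasure μ g l 0) :
    TendstoInMeasure μ (fun i => f i * g i) l 0 := by
  rw [tendstoInMeasure_iff_norm] at hg ⊢
  intro ε hε
  refine tendsto_of_tendsto_of_tendsto_of_le_of_le tendsto_const_nhds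
    (hg (ε / (|M| + 1)) (by positivity)) (fun _ => zero_le)
    fun i => measure_mono fun x (hx : ε ≤ ‖f i x * g i x - 0‖) => ?_
  have hfM : ‖f i x‖ ≤ |M| + 1 := by linarith [hf i x, le_abs_self M]
  rw [sub_zero] at hx
  rw [mem_ofPred_eq, Pi.zero_apply, sub_zero, div_le_iff₀' (by positivity)]
  exact hx.trans ((norm_mul_le _ _).trans (by gcongr))

lemma tendstoInMeasure_of_forall_eLpNorm_sub_le {l' : Filter κ} [l'.NeBot]
    {f : ι → α → E} {F : κ → ι → α → E} {g : α → E} {p : ℝ≥0∞} {e : κ → ℝ≥0∞} (hp : p ≠ 0)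
    (hfm : ∀ i, AEStronglyMeasurable (f i) μ) (hFm : ∀ k i, AEStronglyMeasurable (F k i) μ)
    (he : Tendsto e l' (𝓝 0)) (hfF : ∀ k i, eLpNorm (f i - F k i) p μ ≤ e k)
    (hF : ∀ k, TendstoInMeasure μ (F k) l g) : TendstoInMeasure μ f l g := by
  -- Indexing by `κ × ι` with the filter `l' ×ˢ ⊤` makes the convergence as `k → l'` uniform in `i`.
  have huniform : TendstoInMeasure μ (fun q : κ × ι => f q.2 - F q.1 q.2) (l' ×ˢ ⊤) 0 := by
    refine tendstoInMeasure_of_tendsto_eLpNorm hp (fun q => (hfm _).sub (hFm _ _))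
      aestronglyMeasurable_zero ?_
    refine tendsto_of_tendsto_of_tendsto_of_le_of_le tendsto_const_nhds
      (he.comp tendsto_fst) (fun _ => zero_le) fun q => ?_
    simpa using hfF q.1 q.2
  intro ε hε
  rw [ENNReal.tendsto_nhds_zero]
  intro δ hδ
  have hsmall := ENNReal.tendsto_nhds_zero.1
    (huniform _ (ENNReal.half_pos hε.ne')) _ (ENNReal.half_pos hδ.ne')
  rw [← principal_univ, eventually_prod_principal_iff] at hsmall
  obtain ⟨k, hk⟩ := hsmall.exists
  filter_upwards [ENNReal.tendsto_nhds_zero.1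
    (hF k _ (ENNReal.half_pos hε.ne')) _ (ENNReal.half_pos hδ.ne')] with i hi
  calc μ {x | ε ≤ edist (f i x) (g x)}
      ≤ μ ({x | ε / 2 ≤ edist ((f i - F k i) x) 0} ∪ {x | ε / 2 ≤ edist (F k i x) (g x)}) := by
        refine measure_mono fun x (hx : ε ≤ _) => ?_
        by_contra! hlt
        simp only [mem_union, mem_ofPred_eq, not_or, not_le, Pi.sub_apply, edist_zero_right,
          ← edist_eq_enorm_sub] at hlt
        refine (hx.trans (edist_triangle _ (F k i x) _)).not_gt ?_
        exact (ENNReal.add_lt_add hlt.1 hlt.2).trans_eq (ENNReal.add_halves ε)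
    _ ≤ δ / 2 + δ / 2 := (measure_union_le _ _).trans (add_le_add (hk i (mem_univ i)) hi)
    _ = δ := ENNReal.add_halves δ

lemma eLpNorm_sub_le_tsum_of_tendstoInMeasure {S : ℕ → α → E} {Z : α → E} {p : ℝ≥0∞}
    {e : ℕ → ℝ≥0∞} (hp : 1 ≤ p) (hSm : ∀ m, AEStronglyMeasurable (S m) μ)
    (hS : TendstoInMeasure μ S atTop Z) (hstep : ∀ m, eLpNorm (S (m + 1) - S m) p μ ≤ e m)
    (m : ℕ) : eLpNorm (Z - S m) p μ ≤ ∑' k, e (k + m) := by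
  have hpartial (n : ℕ) : eLpNorm (S (n + m) - S m) p μ ≤ ∑' k, e (k + m) := by
    have hsum : S (n + m) - S m = ∑ k ∈ Finset.range n, (S (k + m + 1) - S (k + m)) := by
      simpa [add_right_comm] using (Finset.sum_range_sub (fun k => S (k + m)) n).symm
    rw [hsum]
    calc _ ≤ ∑ k ∈ Finset.range n, eLpNorm (S (k + m + 1) - S (k + m)) p μ :=
          eLpNorm_sum_le (fun k _ => (hSm _).sub (hSm _)) hp
      _ ≤ ∑ k ∈ Finset.range n, e (k + m) := Finset.sum_le_sum fun k _ => hstep _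
      _ ≤ ∑' k, e (k + m) := ENNReal.sum_le_tsum _
  have hconst : TendstoInMeasure μ (fun _ : ℕ => S m) atTop (S m) :=
    fun ε hε => by simp [hε.ne']
  exact eLpNorm_le_of_tendstoInMeasure (Eventually.of_forall hpartial)
    (tendstoInMeasure_sub (hS.comp (tendsto_add_atTop_nat m)) hconst)
    fun n => (hSm _).sub (hSm _)

end ConvergenceInMeasure

section HolderInLp

variable {α T E : Type*} {mα : MeasurableSpace α} {μ : Measure α} [PseudoEMetricSpace T]
  [NormedAddCommGroup E] {C γ : ℝ≥0} {p q : ℝ≥0∞} {Y : T → α → E} {S : Set T}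

/-- The process `Y` is `γ`-Hölder continuous on `S` with constant `C` in `L^p(μ)`: the analogue of
`HolderOnWith` for the map `t ↦ Y t` into `L^p(μ)`, stated with `eLpNorm` so that the random
variables `Y t` need neither be bundled nor be in `L^p` themselves. -/
def HolderOnWithInLp (C γ : ℝ≥0) (p : ℝ≥0∞) (μ : Measure α) (Y : T → α → E) (S : Set T) : Prop :=
  ∀ u ∈ S, ∀ v ∈ S, eLpNorm (Y v - Y u) p μ ≤ C * edist u v ^ (γ : ℝ)

namespace HolderOnWithInLp

lemma of_exponent_le [IsProbabilityMeasure μ] (hY : HolderOnWithInLp C γ q μ Y S) (hpq : p ≤ q)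
    (hYm : ∀ u ∈ S, AEStronglyMeasurable (Y u) μ) : HolderOnWithInLp C γ p μ Y S :=
  fun u hu v hv =>
    (eLpNorm_le_eLpNorm_of_exponent_le hpq ((hYm v hv).sub (hYm u hu))).trans (hY u hu v hv)

lemma of_tendstoInMeasure {ι : Type*} {l : Filter ι} [l.NeBot] [l.IsCountablyGenerated]
    {Z : ι → T → α → E} (hZ : ∀ i, HolderOnWithInLp C γ p μ (Z i) S)
    (hZm : ∀ i, ∀ u ∈ S, AEStronglyMeasurable (Z i u) μ)
    (hlim : ∀ u ∈ S, TendstoInMeasure μ (fun i => Z i u) l (Y u)) :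
    HolderOnWithInLp C γ p μ Y S := fun u hu v hv =>
  eLpNorm_le_of_tendstoInMeasure (Eventually.of_forall fun i => hZ i u hu v hv)
    (tendstoInMeasure_sub (hlim v hv) (hlim u hu)) fun i => (hZm i v hv).sub (hZm i u hu)

end HolderOnWithInLp

lemma eLpNorm_le_of_integral_rpow_norm_le {f : α → E} {r K : ℝ} (hr : 0 < r) (hK : 0 ≤ K)
    (hf : MemLp f (.ofReal r) μ) (h : ∫ x, ‖f x‖ ^ r ∂μ ≤ K ^ r) :
    eLpNorm f (.ofReal r) μ ≤ .ofReal K := by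
  rw [hf.eLpNorm_eq_integral_rpow_norm (by simpa using hr) ofReal_ne_top, toReal_ofReal hr.le]
  refine ofReal_le_ofReal ?_
  calc (∫ x, ‖f x‖ ^ r ∂μ) ^ r⁻¹ ≤ (K ^ r) ^ r⁻¹ := by gcongr
    _ = K := Real.rpow_rpow_inv hK hr.ne'

lemma holderOnWithInLp_of_integral_rpow_norm_le {Y : ℝ → α → E} {S : Set ℝ} {r : ℝ} (hr : 0 < r)
    (hYp : ∀ u ∈ S, ∀ v ∈ S, MemLp (Y v - Y u) (.ofReal r) μ)
    (h : ∀ u ∈ S, ∀ v ∈ S, ∫ x, ‖Y v x - Y u x‖ ^ r ∂μ ≤ C ^ r * |v - u| ^ (r * γ)) :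
    HolderOnWithInLp C γ (.ofReal r) μ Y S := by
  intro u hu v hv
  have hmoment : ∫ x, ‖(Y v - Y u) x‖ ^ r ∂μ ≤ (C * |v - u| ^ (γ : ℝ)) ^ r := by
    rw [Real.mul_rpow C.coe_nonneg (by positivity), ← Real.rpow_mul (abs_nonneg _),
      mul_comm (γ : ℝ)]
    exact h u hu v hv
  refine (eLpNorm_le_of_integral_rpow_norm_le hr (by positivity) (hYp u hu v hv) hmoment).trans_eq
    ?_
  rw [ofReal_mul C.coe_nonneg, ofReal_coe_nnreal, edist_comm, edist_dist, Real.dist_eq,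
    ofReal_rpow_of_nonneg (abs_nonneg _) γ.coe_nonneg]

end HolderInLp

section DyadicPartition

lemma sum_range_two_mul {M : Type*} [AddCommMonoid M] (f : ℕ → M) (n : ℕ) :
    ∑ i ∈ Finset.range (2 * n), f i = ∑ i ∈ Finset.range n, (f (2 * i) + f (2 * i + 1)) := by
  induction n with
  | zero => rfl
  | succ n ih => rw [mul_add_one, Finset.sum_range_succ, Finset.sum_range_succ,
      Finset.sum_range_succ, ih, add_assoc]

/-- The `k`-th point of the `m`-th dyadic partition of the interval from `a` to `t`; it lies in
the interval only for `k ≤ 2 ^ m`. -/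
noncomputable def dyadicPoint (a t : ℝ) (m k : ℕ) : ℝ := a + k / 2 ^ m * (t - a)

variable {a t : ℝ} {m k : ℕ}

lemma dyadicPoint_zero (a t : ℝ) (m : ℕ) : dyadicPoint a t m 0 = a := by simp [dyadicPoint]

lemma dyadicPoint_two_pow (a t : ℝ) (m : ℕ) : dyadicPoint a t m (2 ^ m) = t := by
  simp [dyadicPoint]

lemma dyadicPoint_succ_two_mul (a t : ℝ) (m k : ℕ) :
    dyadicPoint a t (m + 1) (2 * k) = dyadicPoint a t m k := by
  rw [dyadicPoint, dyadicPoint, pow_succ', Nat.cast_mul, Nat.cast_two,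
    mul_div_mul_left _ _ two_ne_zero]

lemma dyadicPoint_monotone (hat : a ≤ t) (m : ℕ) : Monotone (dyadicPoint a t m) := by
  intro j k hjk
  have : 0 ≤ t - a := sub_nonneg.2 hat
  unfold dyadicPoint
  gcongr

lemma dyadicPoint_mem_Icc (hat : a ≤ t) (hk : k ≤ 2 ^ m) : dyadicPoint a t m k ∈ Icc a t :=
  ⟨(dyadicPoint_zero a t m).symm.trans_le (dyadicPoint_monotone hat m k.zero_le),
    (dyadicPoint_monotone hat m hk).trans_eq (dyadicPoint_two_pow a t m)⟩

lemma edist_dyadicPoint_succ (a t : ℝ) (m k : ℕ) :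
    edist (dyadicPoint a t m k) (dyadicPoint a t m (k + 1)) = edist a t * 2⁻¹ ^ m := by
  have hdist : dist (dyadicPoint a t m k) (dyadicPoint a t m (k + 1)) = dist a t * 2⁻¹ ^ m := by
    rw [Real.dist_eq, Real.dist_eq, dyadicPoint, dyadicPoint, ← abs_of_pos (a := (2⁻¹ : ℝ) ^ m)
      (by positivity), ← abs_mul, inv_pow]
    congr 1
    push_cast
    ring
  rw [edist_dist, hdist, ofReal_mul dist_nonneg, ← edist_dist, ofReal_pow (by positivity),
    ofReal_inv_of_pos two_pos, ofReal_ofNat]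

/-- The total error of `2 ^ m` cells, each contributing `K * h ^ θ`, where `h = ℓ / 2 ^ m` is the
mesh of the `m`-th dyadic partition of an interval of length `ℓ`. -/
noncomputable def dyadicError (K : ℝ≥0) (ℓ : ℝ≥0∞) (θ : ℝ) (m : ℕ) : ℝ≥0∞ :=
  2 ^ m * (K * (ℓ * 2⁻¹ ^ m) ^ θ)

lemma tsum_dyadicError_ne_top {K : ℝ≥0} {ℓ : ℝ≥0∞} {θ : ℝ} (hℓ : ℓ ≠ ∞) (hθ : 1 < θ) :
    ∑' m, dyadicError K ℓ θ m ≠ ∞ := by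
  have hθ0 : 0 ≤ θ := by linarith
  have hgeometric (m : ℕ) : dyadicError K ℓ θ m = K * ℓ ^ θ * (2 ^ (1 - θ)) ^ m := by
    have hratio : (2 : ℝ≥0∞) ^ (1 - θ) = 2 * 2⁻¹ ^ θ := by
      rw [sub_eq_add_neg, rpow_add _ _ two_ne_zero ofNat_ne_top, rpow_one, inv_rpow, rpow_neg]
    rw [dyadicError, mul_rpow_of_nonneg _ _ hθ0, hratio, mul_pow, ← rpow_natCast_mul,
      ← rpow_mul_natCast, mul_comm θ]
    ring
  have hlt : (2 : ℝ≥0∞) ^ (1 - θ) < 1 :=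
    rpow_lt_one_of_one_lt_of_neg one_lt_two (by linarith)
  simp_rw [hgeometric, ENNReal.tsum_mul_left, ENNReal.tsum_geometric]
  exact mul_ne_top (mul_ne_top coe_ne_top (rpow_ne_top_of_nonneg hθ0 hℓ))
    (inv_ne_top.2 (tsub_pos_of_lt hlt).ne')

lemma tendsto_tsum_dyadicError_add {K : ℝ≥0} {ℓ : ℝ≥0∞} {θ : ℝ} (hℓ : ℓ ≠ ∞) (hθ : 1 < θ) :
    Tendsto (fun m => ∑' k, dyadicError K ℓ θ (k + m)) atTop (𝓝 0) :=
  ENNReal.tendsto_sum_nat_add _ (tsum_dyadicError_ne_top hℓ hθ)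

end DyadicPartition

section LeftRiemannSum

variable {Ω : Type*} {a t : ℝ} {m : ℕ}

/-- The left-endpoint Riemann sum of the process `Y` against `B` over the `m`-th dyadic partition
of the interval from `a` to `t`. -/
noncomputable def leftRiemannSum (Y B : ℝ → Ω → ℝ) (a t : ℝ) (m : ℕ) : Ω → ℝ :=
  ∑ i ∈ Finset.range (2 ^ m), Y (dyadicPoint a t m i) *
    (B (dyadicPoint a t m (i + 1)) - B (dyadicPoint a t m i))

lemma dyadicRiemannSum_eq_leftRiemannSum (X A : ℝ → Ω → ℝ) (f : ℝ → ℝ) (a t : ℝ) (m : ℕ) :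
    dyadicRiemannSum X A f a t m = leftRiemannSum (fun s ω => f (X s ω)) A a t m := by
  ext ω
  simp [dyadicRiemannSum, leftRiemannSum, dyadicPoint, Real.rpow_neg, div_eq_mul_inv]

lemma leftRiemannSum_sub_right (Y A B : ℝ → Ω → ℝ) (a t : ℝ) (m : ℕ) :
    leftRiemannSum Y (A - B) a t m = leftRiemannSum Y A a t m - leftRiemannSum Y B a t m := by
  simp only [leftRiemannSum, ← Finset.sum_sub_distrib, Pi.sub_apply]
  exact Finset.sum_congr rfl fun i _ => by ring

lemma leftRiemannSum_succ_sub (Y B : ℝ → Ω → ℝ) (a t : ℝ) (m : ℕ) :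
    leftRiemannSum Y B a t (m + 1) - leftRiemannSum Y B a t m =
      ∑ i ∈ Finset.range (2 ^ m),
        (Y (dyadicPoint a t (m + 1) (2 * i + 1)) - Y (dyadicPoint a t (m + 1) (2 * i))) *
          (B (dyadicPoint a t (m + 1) (2 * i + 2)) - B (dyadicPoint a t (m + 1) (2 * i + 1))) := by
  rw [leftRiemannSum, leftRiemannSum, pow_succ', sum_range_two_mul, ← Finset.sum_sub_distrib]
  refine Finset.sum_congr rfl fun i _ => ?_
  rw [← dyadicPoint_succ_two_mul a t m i, ← dyadicPoint_succ_two_mul a t m (i + 1), mul_add_one]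
  ring

variable [MeasurableSpace Ω] {μ : Measure Ω} {Y A B : ℝ → Ω → ℝ}

lemma aestronglyMeasurable_leftRiemannSum (hat : a ≤ t)
    (hYm : ∀ s ∈ Icc a t, AEStronglyMeasurable (Y s) μ)
    (hBm : ∀ s ∈ Icc a t, AEStronglyMeasurable (B s) μ) (m : ℕ) :
    AEStronglyMeasurable (leftRiemannSum Y B a t m) μ := by
  refine Finset.aestronglyMeasurable_sum _ fun i hi => ?_
  have hi : i + 1 ≤ 2 ^ m := Finset.mem_range.1 hi
  have hleft := dyadicPoint_mem_Icc hat (i.le_succ.trans hi)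
  exact (hYm _ hleft).mul ((hBm _ (dyadicPoint_mem_Icc hat hi)).sub (hBm _ hleft))

lemma tendstoInMeasure_leftRiemannSum_zero {ι : Type*} {l : Filter ι} {Y B : ι → ℝ → Ω → ℝ}
    {M : ℝ} (hat : a ≤ t) (hY : ∀ i s ω, |Y i s ω| ≤ M)
    (hB : ∀ s ∈ Icc a t, TendstoInMeasure μ (fun i => B i s) l 0) (m : ℕ) :
    TendstoInMeasure μ (fun i => leftRiemannSum (Y i) (B i) a t m) l 0 := by
  rw [← Finset.sum_const_zero (s := Finset.range (2 ^ m))]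
  refine tendstoInMeasure_sum _ fun k hk => tendstoInMeasure_bdd_mul_zero (fun i ω => hY i _ ω) ?_
  have hk : k + 1 ≤ 2 ^ m := Finset.mem_range.1 hk
  simpa using tendstoInMeasure_sub (hB _ (dyadicPoint_mem_Icc hat hk))
    (hB _ (dyadicPoint_mem_Icc hat (k.le_succ.trans hk)))

variable {C D γ δ : ℝ≥0} {p q r : ℝ≥0∞}

lemma eLpNorm_leftRiemannSum_succ_sub_le [HolderTriple p q r] (hr : 1 ≤ r) (hat : a ≤ t)
    (hYm : ∀ s ∈ Icc a t, AEStronglyMeasurable (Y s) μ)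
    (hBm : ∀ s ∈ Icc a t, AEStronglyMeasurable (B s) μ)
    (hY : HolderOnWithInLp C γ p μ Y (Icc a t)) (hB : HolderOnWithInLp D δ q μ B (Icc a t))
    (m : ℕ) :
    eLpNorm (leftRiemannSum Y B a t (m + 1) - leftRiemannSum Y B a t m) r μ ≤
      dyadicError (C * D) (edist a t) (γ + δ) m := by
  have hmem {k i : ℕ} (hi : i ∈ Finset.range (2 ^ m)) (hk : k ≤ 2 * i + 2) :
      dyadicPoint a t (m + 1) k ∈ Icc a t :=
    dyadicPoint_mem_Icc hat (by have := Finset.mem_range.1 hi; rw [pow_succ']; omega)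
  have hYinc {i : ℕ} (hi : i ∈ Finset.range (2 ^ m)) :=
    (hYm _ (hmem hi (k := 2 * i + 1) (by lia))).sub (hYm _ (hmem hi (k := 2 * i) (by lia)))
  have hBinc {i : ℕ} (hi : i ∈ Finset.range (2 ^ m)) :=
    (hBm _ (hmem hi le_rfl)).sub (hBm _ (hmem hi (k := 2 * i + 1) (by lia)))
  rw [leftRiemannSum_succ_sub]
  refine (eLpNorm_sum_le (fun i hi => (hYinc hi).mul (hBinc hi)) hr).trans ?_
  refine (Finset.sum_le_card_nsmul _ _
    (C * D * (edist a t * 2⁻¹ ^ m) ^ (γ + δ : ℝ)) fun i hi => ?_).trans_eq ?_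
  · refine (eLpNorm_smul_le_mul_eLpNorm (p := p) (q := q) (hBinc hi) (hYinc hi)).trans ?_
    have hYle := hY _ (hmem hi (k := 2 * i) (by lia)) _ (hmem hi (k := 2 * i + 1) (by lia))
    have hBle := hB _ (hmem hi (k := 2 * i + 1) (by lia)) _ (hmem hi (k := 2 * i + 1 + 1) (by lia))
    rw [edist_dyadicPoint_succ] at hYle hBle
    calc _ ≤ C * (edist a t * 2⁻¹ ^ (m + 1)) ^ (γ : ℝ) *
          (D * (edist a t * 2⁻¹ ^ (m + 1)) ^ (δ : ℝ)) := mul_le_mul' hYle hBle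
      _ = C * D * (edist a t * 2⁻¹ ^ (m + 1)) ^ (γ + δ : ℝ) := by
          rw [rpow_add_of_nonneg _ _ γ.coe_nonneg δ.coe_nonneg]
          ring
      _ ≤ C * D * (edist a t * 2⁻¹ ^ m) ^ (γ + δ : ℝ) := by
          gcongr _ * (_ * ?_) ^ _
          exact pow_le_pow_right_of_le_one' (by simp) m.le_succ
  · simp [dyadicError]

lemma eLpNorm_sub_leftRiemannSum_le [HolderTriple p q r] (hr : 1 ≤ r) (hat : a ≤ t)
    (hYm : ∀ s ∈ Icc a t, AEStronglyMeasurable (Y s) μ)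
    (hBm : ∀ s ∈ Icc a t, AEStronglyMeasurable (B s) μ)
    (hY : HolderOnWithInLp C γ p μ Y (Icc a t)) (hB : HolderOnWithInLp D δ q μ B (Icc a t))
    {Z : Ω → ℝ} (hZ : TendstoInMeasure μ (leftRiemannSum Y B a t) atTop Z) (m : ℕ) :
    eLpNorm (Z - leftRiemannSum Y B a t m) r μ ≤
      ∑' k, dyadicError (C * D) (edist a t) (γ + δ) (k + m) :=
  eLpNorm_sub_le_tsum_of_tendstoInMeasure hr (aestronglyMeasurable_leftRiemannSum hat hYm hBm) hZ
    (eLpNorm_leftRiemannSum_succ_sub_le hr hat hYm hBm hY hB) m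

lemma eLpNorm_sub_sub_leftRiemannSum_le [HolderTriple p q r] (hr : 1 ≤ r) (hat : a ≤ t)
    (hYm : ∀ s ∈ Icc a t, AEStronglyMeasurable (Y s) μ)
    (hAm : ∀ s ∈ Icc a t, AEStronglyMeasurable (A s) μ)
    (hBm : ∀ s ∈ Icc a t, AEStronglyMeasurable (B s) μ)
    (hY : HolderOnWithInLp C γ p μ Y (Icc a t)) (hA : HolderOnWithInLp D δ q μ A (Icc a t))
    (hB : HolderOnWithInLp D δ q μ B (Icc a t)) {Z W : Ω → ℝ}
    (hZ : TendstoInMeasure μ (leftRiemannSum Y A a t) atTop Z)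
    (hW : TendstoInMeasure μ (leftRiemannSum Y B a t) atTop W) (m : ℕ) :
    eLpNorm (Z - W - leftRiemannSum Y (A - B) a t m) r μ ≤
      2 * ∑' k, dyadicError (C * D) (edist a t) (γ + δ) (k + m) := by
  have hSA := aestronglyMeasurable_leftRiemannSum hat hYm hAm
  have hSB := aestronglyMeasurable_leftRiemannSum hat hYm hBm
  rw [leftRiemannSum_sub_right, sub_sub_sub_comm, two_mul]
  exact (eLpNorm_sub_le ((hZ.aestronglyMeasurable hSA).sub (hSA m))
    ((hW.aestronglyMeasurable hSB).sub (hSB m)) hr).trans (add_le_add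
      (eLpNorm_sub_leftRiemannSum_le hr hat hYm hAm hY hA hZ m)
      (eLpNorm_sub_leftRiemannSum_le hr hat hYm hBm hY hB hW m))

end LeftRiemannSum

section TimeIntegral

variable {Ω : Type*}

/-- The random variable `∫_a^t β_s ds` obtained by integrating the process `β` path by path. -/
noncomputable def timeIntegral (β : ℝ → Ω → ℝ) (a t : ℝ) (ω : Ω) : ℝ := ∫ s in a..t, β s ω

variable [MeasurableSpace Ω] {μ : Measure Ω} {Y β : ℝ → Ω → ℝ} {M N : ℝ}

lemma measurable_timeIntegral (hβ : Measurable (Function.uncurry β)) (a t : ℝ) :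
    Measurable (timeIntegral β a t) := by
  have hswap : StronglyMeasurable (Function.uncurry fun ω s => β s ω) :=
    (hβ.comp measurable_swap).stronglyMeasurable
  exact (hswap.integral_prod_right.sub hswap.integral_prod_right).measurable

lemma intervalIntegrable_path (hβ : Measurable (Function.uncurry β)) (hN : ∀ s ω, |β s ω| ≤ N)
    (ω : Ω) (a t : ℝ) : IntervalIntegrable (fun s => β s ω) volume a t :=
  (intervalIntegrable_const (c := N)).mono_fun
    hβ.of_uncurry_right.aestronglyMeasurable
    (Eventually.of_forall fun s => (hN s ω).trans (le_abs_self N))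

lemma intervalIntegrable_path_mul (hY : Measurable (Function.uncurry Y))
    (hβ : Measurable (Function.uncurry β)) (hM : ∀ s ω, |Y s ω| ≤ M) (hN : ∀ s ω, |β s ω| ≤ N)
    (ω : Ω) (a t : ℝ) : IntervalIntegrable (fun s => Y s ω * β s ω) volume a t :=
  intervalIntegrable_path (hY.mul hβ) (fun s ω => (abs_mul _ _).trans_le
    (mul_le_mul (hM s ω) (hN s ω) (abs_nonneg _) ((abs_nonneg _).trans (hM s ω)))) ω a t

lemma timeIntegral_sub_left (hβ : Measurable (Function.uncurry β)) (hN : ∀ s ω, |β s ω| ≤ N)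
    (a u v : ℝ) : timeIntegral β a v - timeIntegral β a u = timeIntegral β u v :=
  funext fun ω => integral_interval_sub_left (intervalIntegrable_path hβ hN ω a v)
    (intervalIntegrable_path hβ hN ω a u)

lemma memLp_timeIntegral [IsFiniteMeasure μ] (hβ : Measurable (Function.uncurry β))
    (hN : ∀ s ω, |β s ω| ≤ N) (a t : ℝ) (p : ℝ≥0∞) : MemLp (timeIntegral β a t) p μ :=
  .of_bound (measurable_timeIntegral hβ a t).aestronglyMeasurable (N * |t - a|)
    (Eventually.of_forall fun ω => norm_integral_le_of_norm_le_const fun s _ => hN s ω)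

lemma enorm_mul_timeIntegral_sub_le {u v : ℝ} (huv : u ≤ v) (hY : Measurable (Function.uncurry Y))
    (hβ : Measurable (Function.uncurry β)) (hM : ∀ s ω, |Y s ω| ≤ M) {N : ℝ≥0}
    (hN : ∀ s ω, |β s ω| ≤ N) (ω : Ω) :
    ‖Y u ω * timeIntegral β u v ω - timeIntegral (Y * β) u v ω‖ₑ ≤
      N * ∫⁻ s in Ioc u v, ‖Y u ω - Y s ω‖ₑ := by
  have hsub : Y u ω * timeIntegral β u v ω - timeIntegral (Y * β) u v ω =
      ∫ s in u..v, (Y u ω - Y s ω) * β s ω := by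
    simp_rw [sub_mul, timeIntegral, ← intervalIntegral.integral_const_mul, Pi.mul_apply]
    exact (integral_sub ((intervalIntegrable_path hβ hN ω u v).const_mul _)
      (intervalIntegrable_path_mul hY hβ hM hN ω u v)).symm
  rw [hsub, integral_of_le huv, ← lintegral_const_mul' _ _ coe_ne_top]
  refine (enorm_integral_le_lintegral_enorm _).trans (lintegral_mono fun s => ?_)
  rw [enorm_mul, mul_comm]
  gcongr
  exact enorm_le_coe.2 (hN s ω)

variable {C γ : ℝ≥0}

lemma eLpNorm_mul_timeIntegral_sub_le [SFinite μ] {u v : ℝ} (huv : u ≤ v)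
    (hY : Measurable (Function.uncurry Y)) (hβ : Measurable (Function.uncurry β))
    (hM : ∀ s ω, |Y s ω| ≤ M) {N : ℝ≥0} (hN : ∀ s ω, |β s ω| ≤ N)
    (hYγ : HolderOnWithInLp C γ 1 μ Y (Icc u v)) :
    eLpNorm (Y u * timeIntegral β u v - timeIntegral (Y * β) u v) 1 μ ≤
      N * C * edist u v ^ (γ + 1 : ℝ) := by
  have hinc : Measurable (Function.uncurry fun ω s => ‖Y u ω - Y s ω‖ₑ) :=
    ((hY.of_uncurry_left.comp measurable_fst).sub (hY.comp measurable_swap)).enorm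
  have hmean : ∀ s ∈ Ioc u v, ∫⁻ ω, ‖Y u ω - Y s ω‖ₑ ∂μ ≤ C * edist u v ^ (γ : ℝ) := by
    intro s hs
    have hsu : edist s u ≤ edist u v := by
      rw [edist_dist, edist_dist, Real.dist_eq, Real.dist_eq, abs_sub_comm u v,
        abs_of_nonneg (sub_nonneg.2 hs.1.le), abs_of_nonneg (sub_nonneg.2 huv)]
      exact ofReal_le_ofReal (by linarith [hs.2])
    have hLp := hYγ s (Ioc_subset_Icc_self hs) u (left_mem_Icc.2 huv)
    rw [eLpNorm_one_eq_lintegral_enorm] at hLp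
    exact hLp.trans (by gcongr)
  rw [eLpNorm_one_eq_lintegral_enorm]
  calc ∫⁻ ω, ‖(Y u * timeIntegral β u v - timeIntegral (Y * β) u v) ω‖ₑ ∂μ
      ≤ ∫⁻ ω, N * (∫⁻ s in Ioc u v, ‖Y u ω - Y s ω‖ₑ) ∂μ :=
        lintegral_mono (enorm_mul_timeIntegral_sub_le huv hY hβ hM hN)
    _ = N * ∫⁻ s in Ioc u v, ∫⁻ ω, ‖Y u ω - Y s ω‖ₑ ∂μ := by
        rw [lintegral_const_mul' _ _ coe_ne_top, lintegral_lintegral_swap hinc.aemeasurable]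
    _ ≤ N * ∫⁻ _ in Ioc u v, C * edist u v ^ (γ : ℝ) := by
        gcongr 1
        exact setLIntegral_mono measurable_const hmean
    _ = N * C * edist u v ^ (γ + 1 : ℝ) := by
        rw [setLIntegral_const, Real.volume_Ioc, ← abs_of_nonneg (sub_nonneg.2 huv),
          ← Real.dist_eq, ← edist_dist, edist_comm v,
          rpow_add_of_nonneg _ _ γ.coe_nonneg zero_le_one, rpow_one]
        ring

lemma leftRiemannSum_timeIntegral_sub (hY : Measurable (Function.uncurry Y))
    (hβ : Measurable (Function.uncurry β)) (hM : ∀ s ω, |Y s ω| ≤ M) (hN : ∀ s ω, |β s ω| ≤ N)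
    (a t : ℝ) (m : ℕ) :
    leftRiemannSum Y (timeIntegral β a) a t m - timeIntegral (Y * β) a t =
      ∑ i ∈ Finset.range (2 ^ m), (Y (dyadicPoint a t m i) *
          timeIntegral β (dyadicPoint a t m i) (dyadicPoint a t m (i + 1)) -
        timeIntegral (Y * β) (dyadicPoint a t m i) (dyadicPoint a t m (i + 1))) := by
  have hadd : ∑ i ∈ Finset.range (2 ^ m),
      timeIntegral (Y * β) (dyadicPoint a t m i) (dyadicPoint a t m (i + 1)) =
        timeIntegral (Y * β) a t := by
    ext ω
    rw [Finset.sum_apply]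
    refine (sum_integral_adjacent_intervals fun k _ => ?_).trans ?_
    · exact intervalIntegrable_path_mul hY hβ hM hN ω _ _
    · rw [dyadicPoint_zero, dyadicPoint_two_pow]
      rfl
  simp_rw [Finset.sum_sub_distrib, hadd, leftRiemannSum, timeIntegral_sub_left hβ hN]

lemma tendstoInMeasure_leftRiemannSum_timeIntegral [SFinite μ] {a t : ℝ} (hat : a ≤ t)
    (hY : Measurable (Function.uncurry Y)) (hβ : Measurable (Function.uncurry β))
    (hM : ∀ s ω, |Y s ω| ≤ M) {N : ℝ≥0} (hN : ∀ s ω, |β s ω| ≤ N) (hγ : 0 < γ)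
    (hYγ : HolderOnWithInLp C γ 1 μ Y (Icc a t)) :
    TendstoInMeasure μ (leftRiemannSum Y (timeIntegral β a) a t) atTop
      (timeIntegral (Y * β) a t) := by
  have hYm (s : ℝ) : AEStronglyMeasurable (Y s) μ := hY.of_uncurry_left.aestronglyMeasurable
  have hYβ : Measurable (Function.uncurry (Y * β)) := hY.mul hβ
  have hint {φ : ℝ → Ω → ℝ} (hφ : Measurable (Function.uncurry φ)) (u v : ℝ) :
      AEStronglyMeasurable (timeIntegral φ u v) μ :=
    (measurable_timeIntegral hφ u v).aestronglyMeasurable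
  have hbound (m : ℕ) : eLpNorm (leftRiemannSum Y (timeIntegral β a) a t m -
      timeIntegral (Y * β) a t) 1 μ ≤ dyadicError (N * C) (edist a t) (γ + 1) m := by
    rw [leftRiemannSum_timeIntegral_sub hY hβ hM hN]
    refine (eLpNorm_sum_le (fun i _ => ((hYm _).mul (hint hβ _ _)).sub (hint hYβ _ _))
      le_rfl).trans ((Finset.sum_le_card_nsmul _ _
        (N * C * (edist a t * 2⁻¹ ^ m) ^ (γ + 1 : ℝ)) fun i hi => ?_).trans_eq ?_)
    · have hi : i + 1 ≤ 2 ^ m := Finset.mem_range.1 hi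
      have hsub : Icc (dyadicPoint a t m i) (dyadicPoint a t m (i + 1)) ⊆ Icc a t :=
        Icc_subset_Icc (dyadicPoint_mem_Icc hat (i.le_succ.trans hi)).1
          (dyadicPoint_mem_Icc hat hi).2
      rw [← edist_dyadicPoint_succ a t m i]
      exact eLpNorm_mul_timeIntegral_sub_le (dyadicPoint_monotone hat m i.le_succ) hY hβ hM hN
        fun u hu v hv => hYγ u (hsub hu) v (hsub hv)
    · simp [dyadicError]
  have herror : Tendsto (dyadicError (N * C) (edist a t) (γ + 1)) atTop (𝓝 0) :=
    tendsto_atTop_zero_of_tsum_ne_top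
      (tsum_dyadicError_ne_top (edist_ne_top a t) (by simpa using hγ))
  exact tendstoInMeasure_of_tendsto_eLpNorm one_ne_zero
    (aestronglyMeasurable_leftRiemannSum hat (fun s _ => hYm s) fun s _ => hint hβ a s)
    (hint hYβ a t) (tendsto_of_tendsto_of_tendsto_of_le_of_le tendsto_const_nhds herror
      (fun _ => zero_le) hbound)

end TimeIntegral

theorem dirichlet_integral_approximation_general
    {Ω : Type*} [MeasurableSpace Ω] {μ : Measure Ω} [IsProbabilityMeasure μ] {a t : ℝ}
    (hat : a ≤ t) {Y β : ℕ → ℝ → Ω → ℝ} (hY : ∀ n, Measurable (Function.uncurry (Y n)))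
    (hβ : ∀ n, Measurable (Function.uncurry (β n)))
    (hY_bdd : ∃ M : ℝ, ∀ n s ω, |Y n s ω| ≤ M) (hβ_bdd : ∀ n, ∃ N : ℝ, ∀ s ω, |β n s ω| ≤ N)
    {A : ℝ → Ω → ℝ}
    (hA : ∀ s ∈ Icc a t, TendstoInMeasure μ (fun n => timeIntegral (β n) a s) atTop (A s))
    {p₁ p₂ : ℝ≥0∞} (hp : p₁⁻¹ + p₂⁻¹ ≤ 1) {γ₁ γ₂ C D : ℝ≥0} (hγ₁ : 0 < γ₁) (hγ : 1 < γ₁ + γ₂)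
    (hYγ : ∀ n, HolderOnWithInLp C γ₁ p₁ μ (Y n) (Icc a t))
    (hBγ : ∀ n, HolderOnWithInLp D γ₂ p₂ μ (timeIntegral (β n) a) (Icc a t))
    {I : ℕ → Ω → ℝ} (hI : ∀ n, TendstoInMeasure μ (leftRiemannSum (Y n) A a t) atTop (I n)) :
    TendstoInMeasure μ (fun n => I n - timeIntegral (Y n * β n) a t) atTop 0 := by
  obtain ⟨M, hM⟩ := hY_bdd
  set r : ℝ≥0∞ := (p₁⁻¹ + p₂⁻¹)⁻¹
  have : HolderTriple p₁ p₂ r := .of p₁ p₂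
  have hr : 1 ≤ r := ENNReal.one_le_inv.2 hp
  have hp₁ : 1 ≤ p₁ := ENNReal.inv_le_one.1 (le_self_add.trans hp)
  have hYm (n) : ∀ s ∈ Icc a t, AEStronglyMeasurable (Y n s) μ :=
    fun s _ => (hY n).of_uncurry_left.aestronglyMeasurable
  have hBm (n) : ∀ s ∈ Icc a t, AEStronglyMeasurable (timeIntegral (β n) a s) μ :=
    fun s _ => (measurable_timeIntegral (hβ n) a s).aestronglyMeasurable
  have hAm : ∀ s ∈ Icc a t, AEStronglyMeasurable (A s) μ :=
    fun s hs => (hA s hs).aestronglyMeasurable fun n => hBm n s hs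
  have hAγ : HolderOnWithInLp D γ₂ p₂ μ A (Icc a t) := .of_tendstoInMeasure hBγ hBm hA
  have hJ (n) : TendstoInMeasure μ (leftRiemannSum (Y n) (timeIntegral (β n) a) a t) atTop
      (timeIntegral (Y n * β n) a t) := by
    obtain ⟨N, hN⟩ := hβ_bdd n
    exact tendstoInMeasure_leftRiemannSum_timeIntegral hat (hY n) (hβ n) (hM n)
      (fun s ω => (hN s ω).trans N.le_coe_toNNReal) hγ₁ ((hYγ n).of_exponent_le hp₁ (hYm n))
  have hθ : 1 < (γ₁ + γ₂ : ℝ) := mod_cast hγ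
  have herror := ENNReal.Tendsto.const_mul (a := 2)
    (tendsto_tsum_dyadicError_add (K := C * D) (edist_ne_top a t) hθ) (.inr ofNat_ne_top)
  rw [mul_zero] at herror
  refine tendstoInMeasure_of_forall_eLpNorm_sub_le (one_pos.trans_le hr).ne'
    (F := fun m n => leftRiemannSum (Y n) (A - timeIntegral (β n) a) a t m)
    (fun n => ?_) (fun m n => ?_) herror
    (fun m n => eLpNorm_sub_sub_leftRiemannSum_le hr hat (hYm n) hAm (hBm n) (hYγ n) hAγ (hBγ n)
      (hI n) (hJ n) m) fun m => ?_
  · exact ((hI n).aestronglyMeasurable (aestronglyMeasurable_leftRiemannSum hat (hYm n) hAm)).sub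
      (measurable_timeIntegral ((hY n).mul (hβ n)) a t).aestronglyMeasurable
  · exact aestronglyMeasurable_leftRiemannSum hat (hYm n)
      (fun s hs => (hAm s hs).sub (hBm n s hs)) m
  · refine tendstoInMeasure_leftRiemannSum_zero hat hM (fun s hs => ?_) m
    exact tendstoInMeasure_of_edist_le_add (hA s hs) (hA s hs) fun n ω => by
      simp [edist_comm, edist_eq_enorm_sub]

/-- Approximation of the Dirichlet integral: under the stated
assumptions, `I_n − ∫_0^t f_n(X_s)·b_n(X_s) ds → 0` in probability, where `I_n` is the
limit in probability of the dyadic Riemann sums of `f_n(X)` against `A`. -/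
theorem dirichlet_integral_approximation
    {Ω : Type*} [MeasurableSpace Ω] (μ : Measure Ω) [IsProbabilityMeasure μ]
    (T : ℝ) (hT : 0 < T)
    (X : ℝ → Ω → ℝ) (hX : Measurable (Function.uncurry X))
    (f : ℕ → ℝ → ℝ) (hf_cont : ∀ n, Continuous (f n))
    (hf_bdd : ∃ M : ℝ, ∀ n x, |f n x| ≤ M)
    (b : ℕ → ℝ → ℝ) (hb_cont : ∀ n, Continuous (b n))
    (hb_bdd : ∀ n, ∃ M : ℝ, ∀ x, |b n x| ≤ M)
    (A : ℝ → Ω → ℝ)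
    (hAconv : ∀ t' ∈ Icc (0 : ℝ) T,
      TendstoInMeasure μ (fun n ω => ∫ s in (0 : ℝ)..t', b n (X s ω)) atTop (A t'))
    (p₁ p₂ γ₁ γ₂ C_f C_A : ℝ)
    (hp₁ : 0 < p₁) (hp₂ : 0 < p₂) (hp : 1 / p₁ + 1 / p₂ ≤ 1)
    (hγ₁ : 0 < γ₁) (hγ₂ : 0 < γ₂) (hγ : 1 < γ₁ + γ₂)
    (hCf : 1 ≤ C_f) (hCA : 1 ≤ C_A)
    (hf1 : ∀ n, ∀ s' ∈ Icc (0 : ℝ) T, ∀ t' ∈ Icc (0 : ℝ) T,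
      (∫ ω, |f n (X t' ω) - f n (X s' ω)| ^ p₁ ∂μ) ≤ C_f ^ p₁ * |t' - s'| ^ (p₁ * γ₁))
    (hf2 : ∀ n, ∀ t' ∈ Icc (0 : ℝ) T, (∫ ω, |f n (X t' ω)| ^ p₁ ∂μ) ≤ C_f ^ p₁)
    (hA1 : ∀ s' ∈ Icc (0 : ℝ) T, ∀ t' ∈ Icc (0 : ℝ) T,
      (∫ ω, |A t' ω - A s' ω| ^ p₂ ∂μ) ≤ C_A ^ p₂ * |t' - s'| ^ (p₂ * γ₂))
    (hA2 : ∀ n, ∀ s' ∈ Icc (0 : ℝ) T, ∀ t' ∈ Icc (0 : ℝ) T,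
      (∫ ω, |(∫ s in (0 : ℝ)..t', b n (X s ω)) - ∫ s in (0 : ℝ)..s', b n (X s ω)| ^ p₂ ∂μ)
        ≤ C_A ^ p₂ * |t' - s'| ^ (p₂ * γ₂))
    (t : ℝ) (ht : t ∈ Icc (0 : ℝ) T)
    (I : ℕ → Ω → ℝ)
    (hI : ∀ n, TendstoInMeasure μ
      (fun m ω => dyadicRiemannSum X A (f n) 0 t m ω) atTop (I n)) :
    TendstoInMeasure μ
      (fun n ω => I n ω - ∫ s in (0 : ℝ)..t, f n (X s ω) * b n (X s ω))
      atTop (fun _ => (0 : ℝ)) := by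
  obtain ⟨M, hM⟩ := hf_bdd
  lift γ₁ to ℝ≥0 using hγ₁.le
  lift γ₂ to ℝ≥0 using hγ₂.le
  lift C_f to ℝ≥0 using zero_le_one.trans hCf
  lift C_A to ℝ≥0 using zero_le_one.trans hCA
  have hsub : Icc 0 t ⊆ Icc 0 T := Icc_subset_Icc_right ht.2
  have hfX (n) : Measurable (Function.uncurry fun s ω => f n (X s ω)) :=
    (hf_cont n).measurable.comp hX
  have hbX (n) : Measurable (Function.uncurry fun s ω => b n (X s ω)) :=
    (hb_cont n).measurable.comp hX
  have hb_bdd' (n) : ∃ N, ∀ s ω, |b n (X s ω)| ≤ N := (hb_bdd n).imp fun N hN s ω => hN (X s ω)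
  have hfp (n s) : MemLp (fun ω => f n (X s ω)) (.ofReal p₁) μ :=
    .of_bound (hfX n).of_uncurry_left.aestronglyMeasurable M (.of_forall fun ω => hM n (X s ω))
  have hp' : (ENNReal.ofReal p₁)⁻¹ + (ENNReal.ofReal p₂)⁻¹ ≤ 1 := by
    rwa [← ofReal_inv_of_pos hp₁, ← ofReal_inv_of_pos hp₂, ← ofReal_add (by positivity)
      (by positivity), ofReal_le_one, ← one_div, ← one_div]
  simp_rw [dyadicRiemannSum_eq_leftRiemannSum] at hI
  refine dirichlet_integral_approximation_general ht.1 hfX hbX ⟨M, fun n s ω => hM n (X s ω)⟩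
    hb_bdd' (fun s hs => hAconv s (hsub hs)) hp' hγ₁ (mod_cast hγ)
    (fun n => holderOnWithInLp_of_integral_rpow_norm_le hp₁ (fun u _ v _ => (hfp n v).sub (hfp n u))
      fun u hu v hv => hf1 n u (hsub hu) v (hsub hv))
    (fun n => holderOnWithInLp_of_integral_rpow_norm_le hp₂ (fun u _ v _ => ?_)
      fun u hu v hv => hA2 n u (hsub hu) v (hsub hv)) hI
  obtain ⟨N, hN⟩ := hb_bdd' n
  exact (memLp_timeIntegral (hbX n) hN 0 v _).sub (memLp_timeIntegral (hbX n) hN 0 u _)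
end
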